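/- arXiv:2307.14390 — 3 statements merged into one kernel-verified Lean document; each statement's English description precedes it below -/
import Mathlib

section
/- Let (Λ_j)_{j∈J} be a family of bounded operators Λ_j : H → V_j and let 0 < C ≤ D. The following are equivalent: (1) (Λ_j)_{j∈J} is a g-frame for H with bounds C, D, i.e. C·‖f‖² ≤ Σ_{j∈J} ‖Λ_j f‖² ≤ D·‖f‖² for all f ∈ H; (2) for every f ∈ H the series S f = Σ_{j∈J} Λ_j*(Λ_j f) converges in H and defines a bounded positive linear operator S on H satisfying C·‖f‖² ≤ ⟨S f, f⟩ ≤ D·‖f‖² for all f ∈ H (that is, C·Id ≤ S ≤ D·Id). -/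
theorem gframe_finite_bound
    {J : Type*}
    {H : Type*} [NormedAddCommGroup H] [InnerProductSpace ℂ H] [CompleteSpace H]
    {V : J → Type*} [∀ j, NormedAddCommGroup (V j)] [∀ j, InnerProductSpace ℂ (V j)]
    [∀ j, CompleteSpace (V j)]
    (Λ : ∀ j, H →L[ℂ] V j) (D : ℝ) 
    (hs : ∀ f : H, Summable fun j => ‖Λ j f‖ ^ 2)
    (hb : ∀ f : H, ∑' j, ‖Λ j f‖ ^ 2 ≤ D * ‖f‖ ^ 2) (hD : 0 ≤ D) (f : H) (F : Finset J) :
    ‖∑ j ∈ F, (Λ j).adjoint (Λ j f)‖ ^ 2 ≤ D * ∑ j ∈ F, ‖Λ j f‖ ^ 2 := by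
  set g := ∑ j ∈ F, (Λ j).adjoint (Λ j f) with hg
  have h1 : ‖g‖ ^ 2 ≤ ∑ j ∈ F, ‖Λ j f‖ * ‖Λ j g‖ := by
    have e : ‖g‖ ^ 2 = ∑ j ∈ F, (inner ℂ (Λ j f) (Λ j g) : ℂ).re := by
      have h := inner_self_eq_norm_sq (𝕜 := ℂ) g
      rw [← h]
      conv_lhs => rw [hg, sum_inner, ← hg]
      simp [ContinuousLinearMap.adjoint_inner_left]
    rw [e]
    exact Finset.sum_le_sum fun j _ => re_inner_le_norm (𝕜 := ℂ) _ _
  have h2 := Finset.sum_mul_sq_le_sq_mul_sq F (fun j => ‖Λ j f‖) (fun j => ‖Λ j g‖)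
  have h3 : ∑ j ∈ F, ‖Λ j g‖ ^ 2 ≤ D * ‖g‖ ^ 2 :=
    ((hs g).sum_le_tsum F (fun _ _ => by positivity)).trans (hb g)
  have hP : 0 ≤ ∑ j ∈ F, ‖Λ j f‖ ^ 2 := by positivity
  rcases (sq_nonneg ‖g‖).eq_or_lt with h0 | h0
  · rw [← h0]; positivity
  · have h4 : (‖g‖ ^ 2) ^ 2 ≤ (∑ j ∈ F, ‖Λ j f‖ ^ 2) * (D * ‖g‖ ^ 2) :=
      (pow_le_pow_left₀ h0.le h1 2).trans (h2.trans (mul_le_mul_of_nonneg_left h3 hP))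
    refine le_of_mul_le_mul_right ?_ h0
    linarith

/-- For a family of bounded operators `Λ j : H → V j` and `0 < C ≤ D`, the
following are equivalent: (1) `(Λ j)` is a g-frame for `H` with bounds `C, D`; (2) for every
`f` the series `S f = ∑ j, (Λ j)* (Λ j f)` converges and defines a bounded positive operator
`S` on `H` with `C • Id ≤ S ≤ D • Id`, i.e. `C·‖f‖² ≤ ⟨S f, f⟩ ≤ D·‖f‖²` for all `f`. -/
theorem soft_g_frame_iff_operator
    {J : Type*} [Countable J]
    {H : Type*} [NormedAddCommGroup H] [InnerProductSpace ℂ H] [CompleteSpace H]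
    {V : J → Type*} [∀ j, NormedAddCommGroup (V j)] [∀ j, InnerProductSpace ℂ (V j)]
    [∀ j, CompleteSpace (V j)]
    (Λ : ∀ j, H →L[ℂ] V j) (C D : ℝ) (hC : 0 < C) (hCD : C ≤ D) :
    ((∀ f : H, Summable fun j => ‖Λ j f‖ ^ 2) ∧
      (∀ f : H, C * ‖f‖ ^ 2 ≤ ∑' j, ‖Λ j f‖ ^ 2 ∧ ∑' j, ‖Λ j f‖ ^ 2 ≤ D * ‖f‖ ^ 2)) ↔
    (∃ S : H →L[ℂ] H, S.IsPositive ∧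
      (∀ f : H, HasSum (fun j => (Λ j).adjoint (Λ j f)) (S f)) ∧
      (∀ f : H, C * ‖f‖ ^ 2 ≤ (inner ℂ (S f) f : ℂ).re ∧
        (inner ℂ (S f) f : ℂ).re ≤ D * ‖f‖ ^ 2)) := by
  have key : ∀ f s : H, HasSum (fun j => (Λ j).adjoint (Λ j f)) s →
      HasSum (fun j => ‖Λ j f‖ ^ 2) (inner ℂ s f : ℂ).re := by
    intro f s h
    have h1 : HasSum (fun j => (inner ℂ f ((Λ j).adjoint (Λ j f)) : ℂ).re) (inner ℂ f s : ℂ).re :=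
      Complex.hasSum_re (h.mapL (innerSL ℂ f))
    have e : (inner ℂ s f : ℂ).re = (inner ℂ f s : ℂ).re := inner_re_symm (𝕜 := ℂ) s f
    rw [e]
    convert h1 using 2 with j
    rw [ContinuousLinearMap.adjoint_inner_right]
    exact (inner_self_eq_norm_sq (𝕜 := ℂ) _).symm
  constructor
  · rintro ⟨hs, hb⟩
    have hD : 0 ≤ D := hC.le.trans hCD
    have fb := gframe_finite_bound Λ D hs (fun f => (hb f).2) hD
    have hsum : ∀ f : H, Summable (fun j => (Λ j).adjoint (Λ j f)) := by
      intro f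
      rw [summable_iff_vanishing_norm]
      intro ε hε
      obtain ⟨s, h⟩ := summable_iff_vanishing_norm.1 (hs f) (ε ^ 2 / (D + 1)) (by positivity)
      refine ⟨s, fun t ht => ?_⟩
      have h1 := h t ht
      rw [Real.norm_of_nonneg (by positivity), lt_div_iff₀ (by positivity)] at h1
      have h2 := fb f t
      have hP : 0 ≤ ∑ j ∈ t, ‖Λ j f‖ ^ 2 := by positivity
      exact lt_of_pow_lt_pow_left₀ 2 hε.le (by nlinarith)
    have hbd : ∀ f : H, ‖∑' j, (Λ j).adjoint (Λ j f)‖ ≤ D * ‖f‖ := by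
      intro f
      refine le_of_tendsto (hsum f).hasSum.norm (Filter.Eventually.of_forall fun t => ?_)
      have h2 := fb f t
      have h3 := ((hs f).sum_le_tsum t (fun _ _ => by positivity)).trans (hb f).2
      refine le_of_sq_le_sq ?_ (by positivity)
      nlinarith [mul_le_mul_of_nonneg_left h3 hD]
    let S : H →L[ℂ] H := LinearMap.mkContinuous
      { toFun := fun f => ∑' j, (Λ j).adjoint (Λ j f)
        map_add' := fun f g => by
          simp only [map_add]
          exact (hsum f).tsum_add (hsum g)
        map_smul' := fun c f => by
          simp only [map_smul, RingHom.id_apply]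
          exact (hsum f).tsum_const_smul c } D hbd
    have hS : ∀ f : H, HasSum (fun j => (Λ j).adjoint (Λ j f)) (S f) := fun f => (hsum f).hasSum
    have hre : ∀ f : H, (inner ℂ (S f) f : ℂ).re = ∑' j, ‖Λ j f‖ ^ 2 :=
      fun f => (key f _ (hS f)).tsum_eq.symm
    refine ⟨S, ?_, hS, fun f => by rw [hre]; exact hb f⟩
    refine ⟨fun f g => ?_, fun f => ?_⟩
    · have h1 : HasSum (fun j => (inner ℂ f ((Λ j).adjoint (Λ j g)) : ℂ)) (inner ℂ f (S g)) :=
        (hS g).mapL (innerSL ℂ f)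
      have h2 : HasSum (fun j => (inner ℂ g ((Λ j).adjoint (Λ j f)) : ℂ)) (inner ℂ g (S f)) :=
        (hS f).mapL (innerSL ℂ g)
      have h3 := h2.star
      simp only [ContinuousLinearMap.adjoint_inner_right] at h1 h3
      have h4 : (star (inner ℂ g (S f)) : ℂ) = inner ℂ (S f) g := inner_conj_symm _ _
      have h5 : ∀ j, (star (inner ℂ (Λ j g) (Λ j f)) : ℂ) = inner ℂ (Λ j f) (Λ j g) :=
        fun j => inner_conj_symm _ _
      simp only [h4, h5] at h3
      exact h3.unique h1
    · have : 0 ≤ (inner ℂ (S f) f : ℂ).re := by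
        rw [hre]; exact tsum_nonneg fun _ => by positivity
      exact this
  · rintro ⟨S, -, hS, hb⟩
    refine ⟨fun f => (key f _ (hS f)).summable, fun f => ?_⟩
    rw [(key f _ (hS f)).tsum_eq]
    exact hb f
end

section
/- Let (Λ_j)_{j∈J} be a g-frame for H with bounds C_Λ, D_Λ. Suppose for each j ∈ J the family (f_{j,k})_{k∈K_j} is a frame for V_j with bounds A_j, B_j, and there exist constants 0 < A ≤ B with A ≤ A_j ≤ B_j ≤ B for all j. Then the family (Λ_j* f_{j,k})_{j∈J, k∈K_j} is a frame for H with bounds A·C_Λ and B·D_Λ; that is, A·C_Λ·‖f‖² ≤ Σ_{j∈J} Σ_{k∈K_j} |⟨f, Λ_j* f_{j,k}⟩|² ≤ B·D_Λ·‖f‖² for all f ∈ H. -/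
/-- If `(Λ j)` is a g-frame for `H` with bounds `CΛ, DΛ`, and for each `j` the
family `(F j k)_{k}` is a frame for `V j` with bounds `Afam j, Bfam j` satisfying
`A ≤ Afam j ≤ Bfam j ≤ B` for fixed constants `0 < A ≤ B`, then `((Λ j)* (F j k))_{j,k}` is a
frame for `H` with bounds `A·CΛ` and `B·DΛ`. -/
theorem soft_g_frame_comp_frame_is_frame
    {J : Type*} [Countable J] {K : J → Type*} [∀ j, Countable (K j)]
    {H : Type*} [NormedAddCommGroup H] [InnerProductSpace ℂ H] [CompleteSpace H]
    {V : J → Type*} [∀ j, NormedAddCommGroup (V j)] [∀ j, InnerProductSpace ℂ (V j)]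
    [∀ j, CompleteSpace (V j)]
    (Λ : ∀ j, H →L[ℂ] V j) (CΛ DΛ : ℝ) (hCΛ : 0 < CΛ) (hCΛDΛ : CΛ ≤ DΛ)
    (hgSummable : ∀ f : H, Summable fun j => ‖Λ j f‖ ^ 2)
    (hgFrame : ∀ f : H,
      CΛ * ‖f‖ ^ 2 ≤ ∑' j, ‖Λ j f‖ ^ 2 ∧ ∑' j, ‖Λ j f‖ ^ 2 ≤ DΛ * ‖f‖ ^ 2)
    (F : ∀ j, K j → V j) (A B : ℝ) (hA : 0 < A) (hAB : A ≤ B)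
    (Afam Bfam : J → ℝ)
    (hbounds : ∀ j, A ≤ Afam j ∧ Afam j ≤ Bfam j ∧ Bfam j ≤ B)
    (hfSummable : ∀ (j : J) (g : V j), Summable fun k => ‖(inner ℂ g (F j k) : ℂ)‖ ^ 2)
    (hfFrame : ∀ (j : J) (g : V j),
      Afam j * ‖g‖ ^ 2 ≤ ∑' k, ‖(inner ℂ g (F j k) : ℂ)‖ ^ 2 ∧
      ∑' k, ‖(inner ℂ g (F j k) : ℂ)‖ ^ 2 ≤ Bfam j * ‖g‖ ^ 2) :
    ∀ f : H,
      Summable (fun p : Σ j, K j => ‖(inner ℂ f ((Λ p.1).adjoint (F p.1 p.2)) : ℂ)‖ ^ 2) ∧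
      A * CΛ * ‖f‖ ^ 2 ≤
        ∑' p : Σ j, K j, ‖(inner ℂ f ((Λ p.1).adjoint (F p.1 p.2)) : ℂ)‖ ^ 2 ∧
      ∑' p : Σ j, K j, ‖(inner ℂ f ((Λ p.1).adjoint (F p.1 p.2)) : ℂ)‖ ^ 2 ≤
        B * DΛ * ‖f‖ ^ 2 := by
  intro f
  simp only [ContinuousLinearMap.adjoint_inner_right]
  have hlo : ∀ j, A * ‖Λ j f‖ ^ 2 ≤ ∑' k, ‖(inner ℂ (Λ j f) (F j k) : ℂ)‖ ^ 2 := fun j =>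
    (mul_le_mul_of_nonneg_right (hbounds j).1 (sq_nonneg _)).trans (hfFrame j (Λ j f)).1
  have hhi : ∀ j, ∑' k, ‖(inner ℂ (Λ j f) (F j k) : ℂ)‖ ^ 2 ≤ B * ‖Λ j f‖ ^ 2 := fun j =>
    (hfFrame j (Λ j f)).2.trans (mul_le_mul_of_nonneg_right (hbounds j).2.2 (sq_nonneg _))
  have hs1 : Summable fun j => ∑' k, ‖(inner ℂ (Λ j f) (F j k) : ℂ)‖ ^ 2 :=
    Summable.of_nonneg_of_le (fun j => tsum_nonneg fun k => sq_nonneg _) hhi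
      ((hgSummable f).mul_left B)
  have hs : Summable (fun p : Σ j, K j => ‖(inner ℂ (Λ p.1 f) (F p.1 p.2) : ℂ)‖ ^ 2) :=
    (summable_sigma_of_nonneg fun p => sq_nonneg _).2 ⟨fun j => hfSummable j (Λ j f), hs1⟩
  have ht := hs.tsum_sigma' (fun j => hfSummable j (Λ j f))
  refine ⟨hs, ?_, ?_⟩
  · rw [ht]
    calc A * CΛ * ‖f‖ ^ 2 = A * (CΛ * ‖f‖ ^ 2) := by ring
      _ ≤ A * ∑' j, ‖Λ j f‖ ^ 2 := mul_le_mul_of_nonneg_left (hgFrame f).1 hA.le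
      _ = ∑' j, A * ‖Λ j f‖ ^ 2 := tsum_mul_left.symm
      _ ≤ _ := ((hgSummable f).mul_left A).tsum_le_tsum hlo hs1
  · rw [ht]
    calc _ ≤ ∑' j, B * ‖Λ j f‖ ^ 2 := hs1.tsum_le_tsum hhi ((hgSummable f).mul_left B)
      _ = B * ∑' j, ‖Λ j f‖ ^ 2 := tsum_mul_left
      _ ≤ B * (DΛ * ‖f‖ ^ 2) := mul_le_mul_of_nonneg_left (hgFrame f).2 (hA.le.trans hAB)
      _ = _ := by ring
end

section
/- Let (Λ_j)_{j∈J} be a g-frame for H with bounds C, D and g-frame operator S (which is invertible). Then the family (Λ_j ∘ S⁻¹)_{j∈J} is a g-frame for H with respect to (V_j)_{j∈J} with bounds D⁻¹ and C⁻¹: D⁻¹·‖f‖² ≤ Σ_{j∈J} ‖Λ_j(S⁻¹ f)‖² ≤ C⁻¹·‖f‖² for every f ∈ H. Moreover its g-frame operator is S⁻¹, i.e. Σ_{j∈J} (Λ_j S⁻¹)*(Λ_j S⁻¹ f) = S⁻¹ f for every f ∈ H. -/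
/-- If `(Λ j)` is a g-frame for `H` with bounds `C, D` and (invertible)
g-frame operator `S`, then `(Λ j ∘ S⁻¹)` is a g-frame for `H` with bounds `D⁻¹, C⁻¹`, and its
g-frame operator is `S⁻¹`: `∑ j, (Λ j ∘ S⁻¹)* ((Λ j ∘ S⁻¹) f) = S⁻¹ f` for every `f`. -/
theorem soft_dual_g_frame
    {J : Type*} [Countable J]
    {H : Type*} [NormedAddCommGroup H] [InnerProductSpace ℂ H] [CompleteSpace H]
    {V : J → Type*} [∀ j, NormedAddCommGroup (V j)] [∀ j, InnerProductSpace ℂ (V j)]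
    [∀ j, CompleteSpace (V j)]
    (Λ : ∀ j, H →L[ℂ] V j) (C D : ℝ) (hC : 0 < C) (hCD : C ≤ D)
    (hSummable : ∀ f : H, Summable fun j => ‖Λ j f‖ ^ 2)
    (hFrame : ∀ f : H,
      C * ‖f‖ ^ 2 ≤ ∑' j, ‖Λ j f‖ ^ 2 ∧ ∑' j, ‖Λ j f‖ ^ 2 ≤ D * ‖f‖ ^ 2)
    (S : H ≃L[ℂ] H)
    (hS : ∀ f : H, HasSum (fun j => (Λ j).adjoint (Λ j f)) (S f)) :
    (∀ f : H, Summable fun j => ‖Λ j (S.symm f)‖ ^ 2) ∧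
    (∀ f : H,
      D⁻¹ * ‖f‖ ^ 2 ≤ ∑' j, ‖Λ j (S.symm f)‖ ^ 2 ∧
      ∑' j, ‖Λ j (S.symm f)‖ ^ 2 ≤ C⁻¹ * ‖f‖ ^ 2) ∧
    (∀ f : H, HasSum
      (fun j => (ContinuousLinearMap.adjoint ((Λ j).comp (S.symm : H →L[ℂ] H)))
        (((Λ j).comp (S.symm : H →L[ℂ] H)) f))
      (S.symm f)) := by
  have hD : 0 < D := hC.trans_le hCD
  have hin : ∀ x y : H, HasSum (fun j => inner ℂ (Λ j y) (Λ j x)) (inner ℂ y (S x)) := by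
    intro x y
    have h := (hS x).mapL (innerSL ℂ y)
    simpa [ContinuousLinearMap.adjoint_inner_right] using h
  have hsym : ∀ x y : H, inner ℂ (S x) y = inner ℂ x (S y) := by
    intro x y
    have h1 := (Complex.hasSum_conj' (f := fun j => inner ℂ (Λ j y) (Λ j x))).2 (hin x y)
    simp only [inner_conj_symm] at h1
    exact h1.unique (hin y x)
  have hadj : ContinuousLinearMap.adjoint (S.symm : H →L[ℂ] H) = (S.symm : H →L[ℂ] H) := by
    symm
    rw [ContinuousLinearMap.eq_adjoint_iff]
    intro x y
    have h := hsym (S.symm x) (S.symm y)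
    simpa using h.symm
  have hre : ∀ x y : H, HasSum (fun j => (inner ℂ (Λ j y) (Λ j x)).re) (inner ℂ y (S x)).re :=
    fun x y => Complex.hasSum_re (hin x y)
  have hsq : ∀ (E : Type _) [NormedAddCommGroup E] [InnerProductSpace ℂ E] (x : E),
      (inner ℂ x x).re = ‖x‖ ^ 2 := by
    intro E _ _ x
    exact inner_self_eq_norm_sq (𝕜 := ℂ) x
  refine ⟨fun f => hSummable _, fun f => ⟨?_, ?_⟩, fun f => ?_⟩
  · have h1 := (hre (S.symm f) f).mul_left 2
    rw [S.apply_symm_apply, hsq] at h1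
    have h2 := ((hSummable (S.symm f)).hasSum.mul_left D).add ((hSummable f).hasSum.mul_left D⁻¹)
    have h3 := hasSum_le (fun j => ?_) h1 h2
    · have h4 : D⁻¹ * ∑' j, ‖Λ j f‖ ^ 2 ≤ ‖f‖ ^ 2 := by
        rw [inv_mul_le_iff₀ hD]
        exact (hFrame f).2
      rw [inv_mul_le_iff₀ hD]
      linarith
    · have h5 : (inner ℂ (Λ j f) (Λ j (S.symm f))).re ≤ ‖Λ j f‖ * ‖Λ j (S.symm f)‖ :=
        re_inner_le_norm (𝕜 := ℂ) _ _
      have h6 : 0 ≤ D⁻¹ * (D * ‖Λ j (S.symm f)‖ - ‖Λ j f‖) ^ 2 := by positivity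
      have h7 : D⁻¹ * (D * ‖Λ j (S.symm f)‖ - ‖Λ j f‖) ^ 2 = D * ‖Λ j (S.symm f)‖ ^ 2
          - 2 * (‖Λ j f‖ * ‖Λ j (S.symm f)‖) + D⁻¹ * ‖Λ j f‖ ^ 2 := by
        field_simp
        ring
      linarith
  · have h1 := hre (S.symm f) (S.symm f)
    simp only [inner_self_eq_norm_sq_to_K, S.apply_symm_apply] at h1
    have h1' : HasSum (fun j => ‖Λ j (S.symm f)‖ ^ 2) (inner ℂ (S.symm f) f).re := by
      convert h1 using 2 with j
      norm_cast
    have h2 := (hFrame (S.symm f)).1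
    rw [h1'.tsum_eq] at h2 ⊢
    have h5 : (inner ℂ (S.symm f) f).re ≤ ‖S.symm f‖ * ‖f‖ :=
      re_inner_le_norm (𝕜 := ℂ) _ _
    rw [le_inv_mul_iff₀ hC]
    nlinarith [sq_nonneg (C * ‖S.symm f‖ - ‖f‖)]
  · have h := (hS (S.symm f)).mapL (S.symm : H →L[ℂ] H)
    simpa [ContinuousLinearMap.adjoint_comp, hadj] using h
end
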